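/- Let q be a power of a prime p, let j ≥ 1 be an integer, and set ℓ = (q^j − 1)/(q − 1). Then in K̂ = F_q((T^{-1})), e_ℓ(1/A^{q−1})_{A ∈ A_1} = ((T^q − T)^ℓ / D_j) · (∑_{A ∈ A_1} A^{-(q−1)})^ℓ, where D_j = ∏_{i=0}^{j−1} (T^{q^j} − T^{q^i}). -/

import Mathlib

/-!
For each `d`, let `f_d(z) = z ∏ (1 - z^(q-1) / A^(q-1))`, the product over monic `A` of degree less
than `d`. Its coefficient at `z^(q^j)`, where `q^j = ℓ (q-1) + 1`, is `(-1)^ℓ` times the `ℓ`-th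
elementary symmetric sum of the `A^(-(q-1))` (`coeff_carlitz`). The roots of `f_d` are the
polynomials of degree less than `d`, and `f_d` is `F`-linear (`isFLinear_carlitz`). Comparing
roots, degrees and linear terms (`eq_of_vanishing`) gives the functional equation
`f_(d+1)(T z) = T f_d(z) + c_d f_d(z)^q` (`carlitz_functional_equation`), a finite-level version of
that of the Carlitz exponential.

The coefficients converge as `d → ∞`, by completeness of `F((T⁻¹))` and the ultrametric inequality
(`tendsto_sum_tsum`). In the limit, the coefficients `α_j` of `z^(q^j)` satisfy `α_0 = 1` and
`(T^(q^(j+1)) - T) α_(j+1) = c α_j^q`; the case `j = 0` gives `c = (T^q - T) α_1`, with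
`α_1 = -∑ A^(-(q-1))`. Solving the recursion, `α_j = c^ℓ / D_j` (`limit_coeff_carlitz`), and the
sign `(-1)^ℓ` occurs on both sides.
-/

open Polynomial

/-- The element `T` inside the field of formal Laurent series in `T⁻¹`. -/
noncomputable def TT (F : Type) [Field F] : LaurentSeries F := HahnSeries.single (-1) 1

/-- The embedding of `F[T]` into `K̂ = F((T⁻¹))`. -/
noncomputable def polyEmb (F : Type) [Field F] : Polynomial F →+* LaurentSeries F :=
  Polynomial.eval₂RingHom HahnSeries.C (TT F)

/-! ### The polynomials vanishing on the polynomials of bounded degree -/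

section Algebra

variable (F : Type) [Field F] [Fintype F]

open scoped Classical in
/-- The finite set of polynomials over `F` of degree less than `d`. -/
noncomputable def polysLT (d : ℕ) : Finset F[X] :=
  Finset.univ.image fun a : Fin d → F => ((degreeLTEquiv F d).symm a : F[X])

open scoped Classical in
/-- The finite set of monic polynomials over `F` of degree less than `d`. -/
noncomputable def monicsLT (d : ℕ) : Finset F[X] := (polysLT F d).filter fun A => A.Monic

variable {F}

lemma mem_polysLT {d : ℕ} {A : F[X]} : A ∈ polysLT F d ↔ A.degree < d := by
  rw [← mem_degreeLT]
  simp only [polysLT, Finset.mem_image, Finset.mem_univ, true_and]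
  constructor
  · rintro ⟨a, rfl⟩
    exact Subtype.property _
  · intro h
    exact ⟨degreeLTEquiv F d ⟨A, h⟩, by simp⟩

lemma mem_monicsLT {d : ℕ} {A : F[X]} : A ∈ monicsLT F d ↔ A.degree < d ∧ A.Monic := by
  simp only [monicsLT, Finset.mem_filter, mem_polysLT]

lemma card_polysLT (d : ℕ) : (polysLT F d).card = Fintype.card F ^ d := by
  classical
  have h : Function.Injective fun a : Fin d → F => ((degreeLTEquiv F d).symm a : F[X]) :=
    Subtype.val_injective.comp (degreeLTEquiv F d).symm.injective
  rw [polysLT, Finset.card_image_of_injective _ h]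
  simp

/-- The map `(c, A) ↦ c A` from units times monic polynomials to nonzero polynomials is injective. -/
lemma card_monicsLT_le (d : ℕ) :
    (Fintype.card F - 1) * (monicsLT F d).card + 1 ≤ Fintype.card F ^ d := by
  classical
  have h : (Finset.univ ×ˢ monicsLT F d : Finset (Fˣ × F[X])).card
      ≤ ((polysLT F d).erase 0).card := by
    refine Finset.card_le_card_of_injOn (fun x => C (x.1 : F) * x.2) ?_ ?_
    · rintro ⟨c, A⟩ hx
      have hA := mem_monicsLT.1 (Finset.mem_product.1 hx).2
      have hc : C (c : F) ≠ 0 := by simp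
      simp only [Finset.coe_erase, Set.mem_sdiff, Finset.mem_coe, mem_polysLT,
        Set.mem_singleton_iff]
      refine ⟨?_, mul_ne_zero hc hA.2.ne_zero⟩
      rw [degree_C_mul c.ne_zero]
      exact hA.1
    · rintro ⟨c, A⟩ hx ⟨c', A'⟩ hx' h
      have hA := (mem_monicsLT.1 (Finset.mem_product.1 hx).2).2
      have hA' := (mem_monicsLT.1 (Finset.mem_product.1 hx').2).2
      simp only at h hA hA'
      have hc : (c : F) = c' := by
        have := congrArg leadingCoeff h
        simpa [leadingCoeff_mul, hA.leadingCoeff, hA'.leadingCoeff] using this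
      rw [hc] at h
      have hcA : A = A' := mul_left_cancel₀ (by simp) h
      rw [Prod.mk.injEq]
      exact ⟨Units.ext hc, hcA⟩
  rw [Finset.card_product, Finset.card_univ, Fintype.card_units] at h
  have h0 : (0 : F[X]) ∈ polysLT F d := mem_polysLT.2 (by simp)
  rw [Finset.card_erase_of_mem h0, card_polysLT] at h
  have : 0 < Fintype.card F ^ d := pow_pos Fintype.card_pos _
  omega

variable {K : Type} [Field K] (φ : F[X] →+* K)

/-- The normalised polynomial `z ∏ (1 - z^(q-1) / A^(q-1))`, over the monic `A` of degree less
than `d`, whose roots are the polynomials of degree less than `d`. The field `K` receives `F[X]`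
through `φ`. -/
noncomputable def carlitz (d : ℕ) : K[X] :=
  X * ∏ A ∈ monicsLT F d, (1 - C ((φ A ^ (Fintype.card F - 1))⁻¹) * X ^ (Fintype.card F - 1))

/-- Up to sign, the coefficients of `carlitz` are the elementary symmetric sums. -/
lemma coeff_carlitz (d n : ℕ) :
    (carlitz φ d).coeff (n * (Fintype.card F - 1) + 1) =
      (-1) ^ n * ∑ s ∈ (monicsLT F d).powersetCard n,
        ∏ A ∈ s, (φ A ^ (Fintype.card F - 1))⁻¹ := by
  have hq : 0 < Fintype.card F - 1 := Nat.sub_pos_of_lt Fintype.one_lt_card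
  have hterm : ∀ s : Finset F[X],
      (∏ A ∈ s, -(C ((φ A ^ (Fintype.card F - 1))⁻¹) * X ^ (Fintype.card F - 1))).coeff
        (n * (Fintype.card F - 1)) =
      if s.card = n then (-1) ^ n * ∏ A ∈ s, (φ A ^ (Fintype.card F - 1))⁻¹ else 0 := by
    intro s
    have : (∏ A ∈ s, -(C ((φ A ^ (Fintype.card F - 1))⁻¹) * X ^ (Fintype.card F - 1)))
        = C ((-1) ^ s.card * ∏ A ∈ s, (φ A ^ (Fintype.card F - 1))⁻¹)
          * X ^ (s.card * (Fintype.card F - 1)) := by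
      rw [Finset.prod_neg, Finset.prod_mul_distrib, Finset.prod_const, ← pow_mul, C_mul, C_pow,
        C_neg, C_1, map_prod, mul_comm s.card, mul_assoc]
    rw [this, coeff_C_mul_X_pow]
    by_cases h : s.card = n
    · simp [h]
    · rw [if_neg h, if_neg]
      intro h'
      exact h (Nat.eq_of_mul_eq_mul_right hq h').symm
  rw [carlitz, coeff_X_mul]
  simp_rw [sub_eq_add_neg]
  rw [Finset.prod_one_add, finsetSum_coeff, Finset.mul_sum]
  simp_rw [hterm]
  rw [← Finset.sum_filter, Finset.powersetCard_eq_filter]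

lemma coeff_carlitz_zero (d : ℕ) : (carlitz φ d).coeff 0 = 0 := by
  rw [carlitz, mul_coeff_zero, coeff_X_zero, zero_mul]

lemma coeff_carlitz_one (d : ℕ) : (carlitz φ d).coeff 1 = 1 := by
  simpa using coeff_carlitz φ d 0

lemma natDegree_carlitz_le (d : ℕ) : (carlitz φ d).natDegree ≤ Fintype.card F ^ d := by
  refine le_trans ?_ (card_monicsLT_le d)
  rw [carlitz, add_comm]
  refine natDegree_mul_le_of_le natDegree_X_le ?_
  refine (natDegree_prod_le _ _).trans ?_
  rw [mul_comm, ← smul_eq_mul]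
  refine Finset.sum_le_card_nsmul _ _ _ fun A _ => ?_
  refine (natDegree_sub_le _ _).trans ?_
  rw [natDegree_one, Nat.zero_max]
  exact natDegree_C_mul_X_pow_le _ _

lemma eval_carlitz_of_mem (hφ : Function.Injective φ) {d : ℕ} {A : F[X]} (hA : A.degree < d) :
    (carlitz φ d).eval (φ A) = 0 := by
  classical
  by_cases h0 : A = 0
  · simp [h0, carlitz]
  have hl : A.leadingCoeff ≠ 0 := leadingCoeff_ne_zero.2 h0
  have hM : A * C A.leadingCoeff⁻¹ ∈ monicsLT F d :=
    mem_monicsLT.2 ⟨by rwa [degree_mul_C (inv_ne_zero hl)], monic_mul_leadingCoeff_inv h0⟩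
  rw [carlitz, eval_mul, eval_prod, Finset.prod_eq_zero hM, mul_zero]
  have hA0 : φ A ≠ 0 := (map_ne_zero_iff φ hφ).2 h0
  have hpow : (φ (A * C A.leadingCoeff⁻¹)) ^ (Fintype.card F - 1)
      = φ A ^ (Fintype.card F - 1) := by
    rw [← map_pow, mul_pow, ← C_pow, FiniteField.pow_card_sub_one_eq_one _ (inv_ne_zero hl),
      C_1, mul_one, map_pow]
  simp only [eval_sub, eval_one, eval_mul, eval_C, eval_pow, eval_X]
  rw [hpow, inv_mul_cancel₀ (pow_ne_zero _ hA0), sub_self]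

/-- Two polynomials of degree at most `N` with the same terms of degree at most one, both
vanishing on the same `N` points including `0`, agree: their difference has `N + 1` roots,
`0` being double. -/
lemma eq_of_vanishing {f g : K[X]} {N : ℕ} (S : Finset K) (hS : S.card = N) (h0S : 0 ∈ S)
    (hf : f.natDegree ≤ N) (hg : g.natDegree ≤ N) (h0 : f.coeff 0 = g.coeff 0)
    (h1 : f.coeff 1 = g.coeff 1) (hfS : ∀ x ∈ S, f.eval x = 0) (hgS : ∀ x ∈ S, g.eval x = 0) :
    f = g := by
  have hX : f - g = X * (f - g).divX := by
    conv_lhs => rw [← X_mul_divX_add (f - g)]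
    simp [h0]
  have hN : 0 < N := hS ▸ Finset.card_pos.2 ⟨0, h0S⟩
  have : (f - g).divX = 0 := by
    refine eq_zero_of_natDegree_lt_card_of_eval_eq_zero' _ S ?_ ?_
    · intro x hx
      by_cases hx0 : x = 0
      · rw [hx0, ← coeff_zero_eq_eval_zero, coeff_divX]
        simp [h1]
      · have := congrArg (eval x) hX
        rw [eval_sub, hfS x hx, hgS x hx, eval_mul, eval_X, sub_zero] at this
        exact (mul_eq_zero.1 this.symm).resolve_left hx0
    · rw [natDegree_divX_eq_natDegree_tsub_one, hS]
      have := natDegree_sub_le_of_le hf hg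
      rw [max_self] at this
      omega
  rw [this, mul_zero] at hX
  exact sub_eq_zero.1 hX

lemma exists_of_eval_carlitz (hφ : Function.Injective φ) {d : ℕ} {y : K}
    (hy : (carlitz φ d).eval y = 0) : ∃ A : F[X], A.degree < d ∧ φ A = y := by
  classical
  by_contra! h
  have hc : carlitz φ d = 0 := by
    refine eq_zero_of_natDegree_lt_card_of_eval_eq_zero' _
      (insert y ((polysLT F d).image φ)) ?_ ?_
    · intro x hx
      rcases Finset.mem_insert.1 hx with rfl | hx
      · exact hy
      · obtain ⟨A, hA, rfl⟩ := Finset.mem_image.1 hx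
        exact eval_carlitz_of_mem φ hφ (mem_polysLT.1 hA)
    · rw [Finset.card_insert_of_notMem, Finset.card_image_of_injective _ hφ, card_polysLT]
      · exact Nat.lt_succ_of_le (natDegree_carlitz_le φ d)
      · intro hx
        obtain ⟨A, hA, hAy⟩ := Finset.mem_image.1 hx
        exact h A (mem_polysLT.1 hA) hAy
  have := coeff_carlitz_one φ d
  simp [hc] at this

/-- The polynomial `f` induces an `F`-linear function on `K`, the scalars acting through `φ`. -/
def IsFLinear (f : K[X]) : Prop :=
  (∀ x y, f.eval (x + y) = f.eval x + f.eval y) ∧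
    ∀ (c : F) (x : K), f.eval (φ (C c) * x) = φ (C c) * f.eval x

include φ in
lemma exists_charP : ∃ p n : ℕ, p.Prime ∧ CharP K p ∧ Fintype.card F = p ^ n := by
  obtain ⟨p, hp⟩ := CharP.exists F
  obtain ⟨n, hpp, hn⟩ := FiniteField.card F p
  exact ⟨p, n, hpp, (RingHom.charP_iff (φ.comp C) (φ.comp C).injective p).1 hp, hn⟩

include φ in
lemma add_pow_card (x y : K) :
    (x + y) ^ Fintype.card F = x ^ Fintype.card F + y ^ Fintype.card F := by
  obtain ⟨p, n, hp, hK, hq⟩ := exists_charP (K := K) φ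
  have := Fact.mk hp
  rw [hq, add_pow_char_pow]

include φ in
lemma sub_pow_card (x y : K) :
    (x - y) ^ Fintype.card F = x ^ Fintype.card F - y ^ Fintype.card F := by
  obtain ⟨p, n, hp, hK, hq⟩ := exists_charP (K := K) φ
  have := Fact.mk hp
  rw [hq, sub_pow_char_pow]

include φ in
lemma coeff_pow_card (f : K[X]) (n : ℕ) :
    (f ^ Fintype.card F).coeff (n * Fintype.card F) = f.coeff n ^ Fintype.card F := by
  obtain ⟨p, k, hp, hK, hq⟩ := exists_charP (K := K) φ
  have := Fact.mk hp
  rw [hq, ← map_iterateFrobenius_expand, coeff_map,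
    coeff_expand_mul (pow_pos hp.pos k), iterateFrobenius_def]

variable {φ}

lemma IsFLinear.combine {f : K[X]} (hf : IsFLinear φ f) (a b : K) :
    IsFLinear φ (C a * f + C b * f ^ Fintype.card F) := by
  refine ⟨fun x y => ?_, fun c x => ?_⟩
  · simp only [eval_add, eval_mul, eval_C, eval_pow, hf.1, add_pow_card φ]
    ring
  · simp only [eval_add, eval_mul, eval_C, eval_pow, hf.2]
    rw [mul_pow, ← map_pow φ (C c), ← C_pow, FiniteField.pow_card]
    ring

/-- Given an `F`-linear `f` and a point `y` with `f y ≠ 0`, some combination of `f` and `f ^ q`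
vanishes at `y`, hence on the `F`-span of `y` and the kernel of `f`. -/
lemma IsFLinear.exists_combine {f : K[X]} (hf : IsFLinear φ f) {y : K} (hy : f.eval y ≠ 0)
    (a : K) : ∃ b : K, ∀ (c : F) (x : K), f.eval x = 0 →
      (C a * f + C b * f ^ Fintype.card F).eval (φ (C c) * y + x) = 0 := by
  refine ⟨-(a * f.eval y) / f.eval y ^ Fintype.card F, fun c x hx => ?_⟩
  rw [(hf.combine _ _).1, (hf.combine _ _).2]
  have hq : Fintype.card F ≠ 0 := Fintype.card_ne_zero
  simp only [eval_add, eval_mul, eval_C, eval_pow, hx, zero_pow hq]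
  rw [div_mul_cancel₀ _ (pow_ne_zero _ hy)]
  ring

lemma natDegree_combine_le {f : K[X]} {d : ℕ} (hf : f.natDegree ≤ Fintype.card F ^ d) (a b : K) :
    (C a * f + C b * f ^ Fintype.card F).natDegree ≤ Fintype.card F ^ (d + 1) := by
  refine natDegree_add_le_of_degree_le ?_ ?_
  · exact ((natDegree_C_mul_le _ _).trans hf).trans
      (Nat.pow_le_pow_right Fintype.card_pos (Nat.le_succ d))
  · refine (natDegree_C_mul_le _ _).trans (natDegree_pow_le.trans ?_)
    rw [pow_succ']
    exact Nat.mul_le_mul_left _ hf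

lemma coeff_carlitz_pow_card_zero (d : ℕ) :
    (carlitz φ d ^ Fintype.card F).coeff 0 = 0 := by
  rw [coeff_zero_eq_eval_zero, eval_pow, ← coeff_zero_eq_eval_zero, coeff_carlitz_zero,
    zero_pow Fintype.card_ne_zero]

lemma coeff_carlitz_pow_card_one (d : ℕ) :
    (carlitz φ d ^ Fintype.card F).coeff 1 = 0 := by
  have h : X ^ Fintype.card F ∣ carlitz φ d ^ Fintype.card F :=
    pow_dvd_pow_of_dvd (Dvd.intro _ rfl) _
  exact X_pow_dvd_iff.1 h 1 Fintype.one_lt_card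

/-- By induction: `carlitz φ (d + 1)` is a combination of `carlitz φ d` and its `q`-th power, as
some such combination vanishes on the span of the polynomials of degree less than `d` and `T ^ d`. -/
lemma isFLinear_carlitz (hφ : Function.Injective φ) (d : ℕ) : IsFLinear φ (carlitz φ d) := by
  classical
  induction d with
  | zero =>
    have : monicsLT F 0 = ∅ := by
      ext A
      simp only [mem_monicsLT, Finset.notMem_empty, iff_false]
      rintro ⟨h, hm⟩
      exact hm.ne_zero (by simpa using h)
    have hc : carlitz φ 0 = X := by simp [carlitz, this]
    rw [hc]
    exact ⟨by simp, by simp⟩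
  | succ d ih =>
    have hy : (carlitz φ d).eval (φ (X ^ d)) ≠ 0 := by
      intro h
      obtain ⟨A, hA, hAX⟩ := exists_of_eval_carlitz φ hφ h
      rw [hφ hAX, degree_X_pow] at hA
      exact lt_irrefl _ hA
    obtain ⟨b, hb⟩ := ih.exists_combine hy 1
    have key : carlitz φ (d + 1) = C 1 * carlitz φ d + C b * carlitz φ d ^ Fintype.card F := by
      refine eq_of_vanishing ((polysLT F (d + 1)).image φ)
        ((Finset.card_image_of_injective _ hφ).trans (card_polysLT _)) ?_
        (natDegree_carlitz_le φ _) (natDegree_combine_le (natDegree_carlitz_le φ _) _ _) ?_ ?_ ?_ ?_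
      · exact Finset.mem_image.2 ⟨0, mem_polysLT.2 (by simp), map_zero φ⟩
      · simp [coeff_carlitz_zero, coeff_carlitz_pow_card_zero]
      · simp [coeff_carlitz_one, coeff_carlitz_pow_card_one]
      · intro x hx
        obtain ⟨A, hA, rfl⟩ := Finset.mem_image.1 hx
        exact eval_carlitz_of_mem φ hφ (mem_polysLT.1 hA)
      · intro x hx
        obtain ⟨A, hA, rfl⟩ := Finset.mem_image.1 hx
        have hA := mem_polysLT.1 hA
        have hB : (A - C (A.coeff d) * X ^ d).degree < (d : WithBot ℕ) := by
          rw [degree_lt_iff_coeff_zero] at hA ⊢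
          intro m hm
          rw [coeff_sub, coeff_C_mul_X_pow]
          rcases hm.eq_or_lt with rfl | hm
          · simp
          · rw [if_neg hm.ne', hA m hm, sub_zero]
        have := hb (A.coeff d) _ (eval_carlitz_of_mem φ hφ hB)
        rwa [← map_mul, ← map_add, add_sub_cancel] at this
    rw [key]
    exact ih.combine _ _

/-- Finite-level form of the functional equation `e(T z) = T e(z) + c e(z) ^ q` of the Carlitz
exponential: both sides vanish on the polynomials of degree at most `d` divided by `T`. -/
lemma carlitz_functional_equation (hφ : Function.Injective φ) (d : ℕ) :
    ∃ c : K, (carlitz φ (d + 1)).comp (C (φ X) * X) =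
      C (φ X) * carlitz φ d + C c * carlitz φ d ^ Fintype.card F := by
  classical
  have hT : φ X ≠ 0 := (map_ne_zero_iff φ hφ).2 X_ne_zero
  have hy : (carlitz φ d).eval (φ X)⁻¹ ≠ 0 := by
    intro h
    obtain ⟨A, -, hA⟩ := exists_of_eval_carlitz φ hφ h
    have h1 : A * X = 1 := hφ (by rw [map_mul, hA, inv_mul_cancel₀ hT, map_one])
    simpa using congrArg (coeff · 0) h1
  obtain ⟨c, hc⟩ := (isFLinear_carlitz hφ d).exists_combine hy (φ X)
  refine ⟨c, ?_⟩
  have hinj : Function.Injective fun A : F[X] => φ A * (φ X)⁻¹ :=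
    (mul_left_injective₀ (inv_ne_zero hT)).comp hφ
  refine eq_of_vanishing ((polysLT F (d + 1)).image fun A => φ A * (φ X)⁻¹)
    ((Finset.card_image_of_injective _ hinj).trans (card_polysLT _)) ?_
    ?_ (natDegree_combine_le (natDegree_carlitz_le φ _) _ _) ?_ ?_ ?_ ?_
  · exact Finset.mem_image.2 ⟨0, mem_polysLT.2 (by simp), by simp⟩
  · rw [natDegree_comp, natDegree_C_mul_X _ hT, mul_one]
    exact natDegree_carlitz_le φ _
  · simp [comp_C_mul_X_coeff, coeff_carlitz_zero, coeff_carlitz_pow_card_zero]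
  · simp [comp_C_mul_X_coeff, coeff_carlitz_one, coeff_carlitz_pow_card_one]
  · intro x hx
    obtain ⟨A, hA, rfl⟩ := Finset.mem_image.1 hx
    rw [eval_comp, eval_mul, eval_C, eval_X, mul_left_comm, mul_inv_cancel₀ hT, mul_one]
    exact eval_carlitz_of_mem φ hφ (mem_polysLT.1 hA)
  · intro x hx
    obtain ⟨A, hA, rfl⟩ := Finset.mem_image.1 hx
    have hB : A.divX.degree < (d : WithBot ℕ) := by
      have hA := mem_polysLT.1 hA
      rw [degree_lt_iff_coeff_zero] at hA ⊢
      intro m hm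
      rw [coeff_divX]
      exact hA _ (Nat.succ_le_succ hm)
    have := hc (A.coeff 0) _ (eval_carlitz_of_mem φ hφ hB)
    rwa [show φ A * (φ X)⁻¹ = φ (C (A.coeff 0)) * (φ X)⁻¹ + φ A.divX by
      conv_lhs => rw [← X_mul_divX_add A, map_add, map_mul]
      field_simp
      ring]

/-- The coefficients `a d j` of `z ^ q ^ j` in `carlitz φ d` satisfy the recursion that the
functional equation imposes, with the multiplier determined by the case `j = 0`. -/
lemma coeff_carlitz_recursion (hφ : Function.Injective φ) (d j : ℕ) :
    (carlitz φ (d + 1)).coeff (Fintype.card F ^ (j + 1)) * φ X ^ Fintype.card F ^ (j + 1) =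
      φ X * (carlitz φ d).coeff (Fintype.card F ^ (j + 1)) +
        ((carlitz φ (d + 1)).coeff (Fintype.card F ^ 1) * φ X ^ Fintype.card F ^ 1
          - φ X * (carlitz φ d).coeff (Fintype.card F ^ 1)) *
        (carlitz φ d).coeff (Fintype.card F ^ j) ^ Fintype.card F := by
  obtain ⟨c, hc⟩ := carlitz_functional_equation hφ d
  have h : ∀ i, (carlitz φ (d + 1)).coeff (Fintype.card F ^ (i + 1))
      * φ X ^ Fintype.card F ^ (i + 1) = φ X * (carlitz φ d).coeff (Fintype.card F ^ (i + 1)) +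
        c * (carlitz φ d).coeff (Fintype.card F ^ i) ^ Fintype.card F := by
    intro i
    have := congrArg (coeff · (Fintype.card F ^ (i + 1))) hc
    simp only [comp_C_mul_X_coeff, coeff_add, coeff_C_mul] at this
    rw [this, pow_succ (Fintype.card F) i, coeff_pow_card φ]
  have h0 := h 0
  rw [pow_zero, coeff_carlitz_one, one_pow, mul_one, zero_add] at h0
  rw [h j, h0]
  ring

open Filter Topology in
/-- Passing to the limit in the recursion gives `(T^(q^(j+1)) - T) α (j+1) = c (α j)^q` with
`c = (T^q - T) α 1`, and the products `D_j` satisfy `D_(j+1) = (T^(q^(j+1)) - T) D_j ^ q`. -/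
lemma limit_coeff_carlitz (hφ : Function.Injective φ) [TopologicalSpace K]
    [IsTopologicalRing K] [T2Space K] (α : ℕ → K)
    (hα : ∀ j, Tendsto (fun d => (carlitz φ d).coeff (Fintype.card F ^ j)) atTop (𝓝 (α j)))
    (j : ℕ) :
    α j * ∏ i ∈ Finset.range j, (φ X ^ Fintype.card F ^ j - φ X ^ Fintype.card F ^ i) =
      ((φ X ^ Fintype.card F - φ X) * α 1) ^ (∑ i ∈ Finset.range j, Fintype.card F ^ i) := by
  have h0 : α 0 = 1 := by
    refine tendsto_nhds_unique (hα 0) ?_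
    simp [coeff_carlitz_one]
  have hrec : ∀ j, α (j + 1) * (φ X ^ Fintype.card F ^ (j + 1) - φ X) =
      (φ X ^ Fintype.card F - φ X) * α 1 * α j ^ Fintype.card F := by
    intro j
    have hs := fun j => (hα j).comp (tendsto_add_atTop_nat 1)
    have hl := (hs (j + 1)).mul_const (φ X ^ Fintype.card F ^ (j + 1))
    have hr := ((hα (j + 1)).const_mul (φ X)).add
      ((((hs 1).mul_const (φ X ^ Fintype.card F ^ 1)).sub ((hα 1).const_mul (φ X))).mul
        ((hα j).pow (Fintype.card F)))
    have := tendsto_nhds_unique hl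
      (hr.congr fun d => (coeff_carlitz_recursion hφ d j).symm)
    rw [pow_one] at this
    linear_combination this
  induction j with
  | zero => simp [h0]
  | succ j ih =>
    have hprod : ∏ i ∈ Finset.range j,
        (φ X ^ Fintype.card F ^ (j + 1) - φ X ^ Fintype.card F ^ (i + 1)) =
        (∏ i ∈ Finset.range j, (φ X ^ Fintype.card F ^ j - φ X ^ Fintype.card F ^ i))
          ^ Fintype.card F := by
      rw [← Finset.prod_pow]
      refine Finset.prod_congr rfl fun i _ => ?_
      rw [sub_pow_card φ, ← pow_mul, ← pow_mul, ← pow_succ, ← pow_succ]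
    have hexp : ∑ i ∈ Finset.range (j + 1), Fintype.card F ^ i =
        (∑ i ∈ Finset.range j, Fintype.card F ^ i) * Fintype.card F + 1 := by
      rw [Finset.sum_range_succ', Finset.sum_mul, pow_zero]
      simp_rw [pow_succ]
    rw [Finset.prod_range_succ', hprod, hexp, pow_succ (_ * α 1), pow_mul (_ * α 1), ← ih, mul_pow, pow_zero, pow_one]
    linear_combination (∏ i ∈ Finset.range j,
      (φ X ^ Fintype.card F ^ j - φ X ^ Fintype.card F ^ i)) ^ Fintype.card F * hrec j

end Algebra

/-! ### Convergence in `F((T⁻¹))` -/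

section Analysis

open Filter Topology WithZero

variable (F : Type) [Field F]

lemma coeff_polyEmb (A : F[X]) (n : ℕ) : (polyEmb F A).coeff (-n) = A.coeff n := by
  induction A using Polynomial.induction_on' with
  | add p r hp hr => rw [map_add, HahnSeries.coeff_add, hp, hr, Polynomial.coeff_add]
  | monomial m a =>
    have : polyEmb F (monomial m a) = HahnSeries.single (-m : ℤ) a := by
      simp [polyEmb, TT, HahnSeries.single_pow, HahnSeries.C_apply, HahnSeries.single_mul_single]
    rw [this, HahnSeries.coeff_single, coeff_monomial]
    simp [eq_comm]

lemma polyEmb_injective : Function.Injective (polyEmb F) := by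
  intro A B h
  ext n
  rw [← coeff_polyEmb, h, coeff_polyEmb]

lemma polyEmb_X : polyEmb F X = TT F := by simp [polyEmb]

/-- `|A| ≥ q ^ deg A`, as the coefficient of `T ^ deg A` in `A` does not vanish. -/
lemma exp_natDegree_le {A : F[X]} (hA : A.Monic) :
    exp (A.natDegree : ℤ) ≤ Valued.v (polyEmb F A) := by
  by_contra! h
  have h1 : Valued.v (polyEmb F A) ≤ exp (-(1 - (A.natDegree : ℤ))) := by
    rw [neg_sub]
    by_cases h0 : Valued.v (polyEmb F A) = 0
    · rw [h0]
      exact zero_le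
    · rw [← log_le_iff_le_exp h0]
      rw [← log_lt_iff_lt_exp h0] at h
      omega
  have := (LaurentSeries.valuation_le_iff_coeff_lt_eq_zero F).1 h1 (-(A.natDegree : ℤ)) (by omega)
  rw [coeff_polyEmb, hA.coeff_natDegree] at this
  exact one_ne_zero this

instance : NonarchimedeanAddGroup (LaurentSeries F) where
  is_nonarchimedean U hU := by
    obtain ⟨γ, hγ⟩ := Valued.mem_nhds_zero.1 hU
    exact ⟨⟨Valuation.ltAddSubgroup Valued.v.restrict γ, Valued.isOpen_ball _ _⟩, hγ⟩

variable {F}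

/-- A family in `F((T⁻¹))` whose terms outside the `N`-th set of an exhaustion by finite sets are
at most `q ^ (-N)` is summable, and its sum is the limit along the exhaustion. -/
lemma tendsto_sum_tsum {ι : Type} (f : ι → LaurentSeries F) (E : ℕ → Finset ι) (hE : Monotone E)
    (hex : ∀ x, ∃ N, x ∈ E N) (hf : ∀ N, ∀ x ∉ E N, Valued.v (f x) ≤ exp (-(N : ℤ))) :
    Tendsto (fun N => ∑ x ∈ E N, f x) atTop (𝓝 (∑' x, f x)) := by
  have hs : Summable f := by
    refine NonarchimedeanAddGroup.summable_of_tendsto_cofinite_zero ?_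
    intro U hU
    obtain ⟨γ, hγ⟩ := Valued.mem_nhds_zero.1 hU
    set g := MonoidWithZeroHom.ValueGroup₀.embedding γ.1 with hg
    have hg0 : g ≠ 0 := by simp [hg]
    -- any integer `N` with `-N < log γ` works
    have hN : exp (-(((1 - log g).toNat : ℕ) : ℤ)) < g := by
      rw [← lt_log_iff_exp_lt hg0]
      have := Int.self_le_toNat (1 - log g)
      omega
    rw [Filter.mem_map, mem_cofinite]
    refine (E (1 - log g).toNat).finite_toSet.subset fun x hx => ?_
    by_contra hxE
    refine hx (hγ ?_)
    change Valued.v.restrict (f x) < γ.1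
    rw [Valuation.restrict_lt_iff_lt_embedding]
    exact (hf _ x hxE).trans_lt hN
  exact hs.hasSum.comp (tendsto_atTop_finset_of_monotone hE hex)

variable [Fintype F]

lemma valuation_inv_pow_le {A : F[X]} (hA : A.Monic) :
    Valued.v ((polyEmb F A ^ (Fintype.card F - 1))⁻¹) ≤ exp (-(A.natDegree : ℤ)) := by
  have hq : Fintype.card F - 1 ≠ 0 := Nat.sub_ne_zero_of_lt Fintype.one_lt_card
  rw [map_inv₀, map_pow, exp_neg]
  refine inv_anti₀ exp_pos ((exp_natDegree_le F hA).trans (le_self_pow₀ ?_ hq))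
  refine le_trans ?_ (exp_natDegree_le F hA)
  rw [← exp_zero, exp_le_exp]
  positivity

lemma monicsLT_mono {d e : ℕ} (h : d ≤ e) : monicsLT F d ⊆ monicsLT F e := by
  intro A hA
  rw [mem_monicsLT] at hA ⊢
  exact ⟨hA.1.trans_le (by exact_mod_cast h), hA.2⟩

lemma tendsto_sum_monicsLT :
    Tendsto (fun d => ∑ A ∈ monicsLT F d, (polyEmb F A ^ (Fintype.card F - 1))⁻¹) atTop
      (𝓝 (∑' A : {A : F[X] // A.Monic}, (polyEmb F (A : F[X]) ^ (Fintype.card F - 1))⁻¹)) := by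
  classical
  refine (tendsto_sum_tsum (fun A : {A : F[X] // A.Monic} =>
    (polyEmb F (A : F[X]) ^ (Fintype.card F - 1))⁻¹)
    (fun d => (monicsLT F d).subtype fun A => A.Monic) ?_ ?_ ?_).congr fun d => ?_
  · exact fun d e h => Finset.subtype_mono (monicsLT_mono h)
  · intro A
    refine ⟨A.1.natDegree + 1, Finset.mem_subtype.2 (mem_monicsLT.2 ⟨?_, A.2⟩)⟩
    exact degree_le_natDegree.trans_lt (by exact_mod_cast Nat.lt_succ_self _)
  · intro N A hA
    rw [Finset.mem_subtype, mem_monicsLT, not_and', ← natDegree_lt_iff_degree_lt A.2.ne_zero,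
      not_lt] at hA
    refine (valuation_inv_pow_le A.2).trans ?_
    rw [exp_le_exp, neg_le_neg_iff]
    exact_mod_cast hA A.2
  · exact Finset.sum_subtype_of_mem (fun A => (polyEmb F A ^ (Fintype.card F - 1))⁻¹)
      fun A hA => (mem_monicsLT.1 hA).2

lemma tendsto_sum_powersetCard (n : ℕ) :
    Tendsto (fun d => ∑ s ∈ (monicsLT F d).powersetCard n,
        ∏ A ∈ s, (polyEmb F A ^ (Fintype.card F - 1))⁻¹) atTop
      (𝓝 (∑' s : {s : Finset F[X] // s.card = n ∧ ∀ A ∈ s, A.Monic},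
        ∏ A ∈ s.1, (polyEmb F A ^ (Fintype.card F - 1))⁻¹)) := by
  classical
  refine (tendsto_sum_tsum (fun s : {s : Finset F[X] // s.card = n ∧ ∀ A ∈ s, A.Monic} =>
    ∏ A ∈ s.1, (polyEmb F A ^ (Fintype.card F - 1))⁻¹)
    (fun d => ((monicsLT F d).powersetCard n).subtype
      fun s => s.card = n ∧ ∀ A ∈ s, A.Monic) ?_ ?_ ?_).congr fun d => ?_
  · exact fun d e h => Finset.subtype_mono (Finset.powersetCard_mono (monicsLT_mono h))
  · intro s
    refine ⟨s.1.sup natDegree + 1, Finset.mem_subtype.2 (Finset.mem_powersetCard.2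
      ⟨fun A hA => mem_monicsLT.2 ⟨?_, s.2.2 A hA⟩, s.2.1⟩)⟩
    exact degree_le_natDegree.trans_lt
      (by exact_mod_cast Nat.lt_succ_of_le (Finset.le_sup (f := natDegree) hA))
  · intro N s hs
    rw [Finset.mem_subtype, Finset.mem_powersetCard, not_and', Finset.not_subset] at hs
    obtain ⟨B, hB, hBN⟩ := hs s.2.1
    have hBm := s.2.2 B hB
    rw [mem_monicsLT, not_and', ← natDegree_lt_iff_degree_lt hBm.ne_zero, not_lt] at hBN
    rw [map_prod, ← Finset.mul_prod_erase _ _ hB]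
    refine (mul_le_of_le_one_right' (Finset.prod_le_one' fun A hA => ?_)).trans
      ((valuation_inv_pow_le hBm).trans ?_)
    · refine (valuation_inv_pow_le (s.2.2 A (Finset.mem_of_mem_erase hA))).trans ?_
      rw [← exp_zero, exp_le_exp]
      simp
    · rw [exp_le_exp, neg_le_neg_iff]
      exact_mod_cast hBN hBm
  · refine Finset.sum_subtype_of_mem
      (fun s => ∏ A ∈ s, (polyEmb F A ^ (Fintype.card F - 1))⁻¹) fun s hs => ?_
    have hs := Finset.mem_powersetCard.1 hs
    exact ⟨hs.2, fun A hA => (mem_monicsLT.1 (hs.1 hA)).2⟩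

end Analysis

/-! ### The symmetric sums over all monic polynomials -/

/-- Let `q` be a prime power (a finite field `F` with `q = |F|`), `j ≥ 1`, and
`ℓ = (qʲ - 1)/(q - 1)` (i.e. `ℓ(q-1) = qʲ - 1`).  Then in `K̂ = F_q((T⁻¹))`,
`e_ℓ(1/A^{q-1})_{A ∈ 𝒜₁} = ((Tᑫ - T)^ℓ / D_j) ⬝ (∑_{A ∈ 𝒜₁} A^{-(q-1)})^ℓ`,
where `D_j = ∏_{i=0}^{j-1} (T^{qʲ} - T^{qⁱ})` and `e_ℓ(1/A^{q-1})_{A ∈ 𝒜₁}` is the sum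
over all `ℓ`-element sets of distinct monic polynomials of `∏ᵢ Aᵢ^{-(q-1)}`. -/
theorem esymm_monic_value (F : Type) [Field F] [Fintype F]
    (j : ℕ) (hj : 1 ≤ j) (ℓ : ℕ)
    (hℓ : ℓ * (Fintype.card F - 1) = Fintype.card F ^ j - 1) :
    ∑' s : {s : Finset (Polynomial F) // s.card = ℓ ∧ ∀ A ∈ s, A.Monic},
      ∏ A ∈ s.1, ((polyEmb F A) ^ (Fintype.card F - 1))⁻¹
      = (TT F ^ Fintype.card F - TT F) ^ ℓ /
          (∏ i ∈ Finset.range j,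
            (TT F ^ Fintype.card F ^ j - TT F ^ Fintype.card F ^ i)) *
          (∑' A : {A : Polynomial F // A.Monic},
            ((polyEmb F (A : Polynomial F)) ^ (Fintype.card F - 1))⁻¹) ^ ℓ := by
  have hq : 0 < Fintype.card F - 1 := Nat.sub_pos_of_lt Fintype.one_lt_card
  set L : ℕ → ℕ := fun j => ∑ i ∈ Finset.range j, Fintype.card F ^ i with hLdef
  have hL : ∀ j, L j * (Fintype.card F - 1) + 1 = Fintype.card F ^ j := by
    intro j
    have := geom_sum_mul_add (Fintype.card F - 1) j
    have h1 : Fintype.card F - 1 + 1 = Fintype.card F := by omega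
    rwa [h1] at this
  have hℓL : ℓ = L j := by
    refine Nat.eq_of_mul_eq_mul_right hq ?_
    rw [hℓ, ← hL j, Nat.add_sub_cancel]
  subst hℓL
  set α : ℕ → LaurentSeries F := fun j => (-1) ^ L j *
    ∑' s : {s : Finset F[X] // s.card = L j ∧ ∀ A ∈ s, A.Monic},
      ∏ A ∈ s.1, ((polyEmb F A) ^ (Fintype.card F - 1))⁻¹ with hαdef
  have hα : ∀ j, Filter.Tendsto (fun d => (carlitz (polyEmb F) d).coeff (Fintype.card F ^ j))
      Filter.atTop (nhds (α j)) := by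
    intro j
    refine ((tendsto_sum_powersetCard (L j)).const_mul ((-1) ^ L j)).congr fun d => ?_
    rw [← hL j, coeff_carlitz]
  have hα1 : α 1 = -∑' A : {A : F[X] // A.Monic},
      ((polyEmb F (A : F[X])) ^ (Fintype.card F - 1))⁻¹ := by
    refine tendsto_nhds_unique (hα 1) (tendsto_sum_monicsLT.neg.congr fun d => ?_)
    rw [← hL 1, coeff_carlitz]
    simp [hLdef, Finset.powersetCard_one]
  -- `D_j ≠ 0` is needed because division by zero is `0`
  have hD : ∏ i ∈ Finset.range j,
      (TT F ^ Fintype.card F ^ j - TT F ^ Fintype.card F ^ i) ≠ 0 := by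
    refine Finset.prod_ne_zero_iff.2 fun i hi => sub_ne_zero.2 fun h => ?_
    rw [← polyEmb_X, ← map_pow, ← map_pow] at h
    have h' := congrArg natDegree (polyEmb_injective F h)
    rw [natDegree_X_pow, natDegree_X_pow] at h'
    have := Nat.pow_right_injective Fintype.one_lt_card h'
    exact (Finset.mem_range.1 hi).ne' this
  have key := limit_coeff_carlitz (polyEmb_injective F) α hα j
  rw [hα1, polyEmb_X, mul_neg, neg_pow, mul_pow] at key
  rw [div_mul_eq_mul_div, eq_div_iff hD]
  refine mul_left_cancel₀ (pow_ne_zero (L j) (neg_ne_zero.2 one_ne_zero)) ?_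
  rw [← mul_assoc]
  exact key
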